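/- For a nondegenerate d-simplex Δ in R^d with vertices v_0,…,v_d, circumcenter o_Δ, circumradius R_Δ, and centroid m_Δ = (v_0+…+v_d)/(d+1), one has −Pow(Δ) = Vol(Δ)/((d+1)(d+2)) · Σ_{0≤j<i≤d} ||v_i − v_j||^2. -/

import Mathlib

open MeasureTheory Finset

/-!
In barycentric coordinates `λ`, every `x` in the simplex satisfies
`‖x - o‖² = ∑ i, λᵢ ‖vᵢ - o‖² - ½ ∑ i, ∑ j, λᵢ λⱼ ‖vᵢ - vⱼ‖²`, so only the moments `∫ λᵢ` and
`∫ λᵢ λⱼ` with `i ≠ j` are needed.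

They come from bisecting the edge `vᵢ vⱼ` at its midpoint, which cuts the simplex into the halves
`λⱼ ≤ λᵢ` and `λᵢ ≤ λⱼ`. Each half is an affine image of the whole simplex with Jacobian `1/2`,
under a map that preserves `λᵢ + λⱼ` and pulls `λᵢ - λⱼ` back to `λᵢ`, respectively to `-λⱼ`.
Applied to `(λᵢ - λⱼ) g(λᵢ + λⱼ)`, this self-similarity shows that `∫ λᵢ` and `∫ λᵢ²` do not depend
on `i`; applied to `(λᵢ - λⱼ)²`, it gives `∫ λᵢ λⱼ = ½ ∫ λᵢ²`. The relation `∑ k, λₖ = 1` then fixes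
all the values.
-/

theorem sum_sum_eq_two_mul_sum_sum_Iio {ι R : Type*} [Fintype ι] [LinearOrder ι]
    [LocallyFiniteOrderTop ι] [LocallyFiniteOrderBot ι] [NonAssocSemiring R] (f : ι → ι → R)
    (symm : ∀ i j, f i j = f j i) (diag : ∀ i, f i i = 0) :
    ∑ i, ∑ j, f i j = 2 * ∑ i, ∑ j ∈ Iio i, f i j := by
  have row (i : ι) : ∑ j, f i j = ∑ j ∈ Ioi i, f i j + ∑ j ∈ Iio i, f i j := by
    rw [← sum_disjUnion (disjoint_left.2 fun j hi hj ↦ (mem_Ioi.1 hi).asymm (mem_Iio.1 hj)),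
      Ioi_disjUnion_Iio, ← sum_add_sum_compl {i}, sum_singleton, diag, zero_add]
  have upper : ∑ i, ∑ j ∈ Ioi i, f i j = ∑ i, ∑ j ∈ Iio i, f i j := by
    rw [sum_comm' (t' := univ) (s' := Iio) (by simp)]
    exact sum_congr rfl fun i _ ↦ sum_congr rfl fun j _ ↦ symm j i
  simp only [row, sum_add_distrib, upper, two_mul]

theorem norm_sum_smul_sub_sq {ι E : Type*} [NormedAddCommGroup E] [InnerProductSpace ℝ E]
    {s : Finset ι} {w : ι → ℝ} (hw : ∑ i ∈ s, w i = 1) (p : ι → E) (o : E) :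
    ‖∑ i ∈ s, w i • p i - o‖ ^ 2 = ∑ i ∈ s, w i * ‖p i - o‖ ^ 2 -
      1 / 2 * ∑ i ∈ s, ∑ j ∈ s, w i * w j * ‖p i - p j‖ ^ 2 := by
  have centered : ∑ i ∈ s, w i • p i - o = ∑ i ∈ s, w i • (p i - o) := by
    simp only [smul_sub, sum_sub_distrib, ← sum_smul, hw, one_smul]
  have polarization (i j : ι) : inner ℝ (p i - o) (p j - o) =
      (‖p i - o‖ ^ 2 + ‖p j - o‖ ^ 2 - ‖p i - p j‖ ^ 2) / 2 := by
    rw [real_inner_eq_norm_mul_self_add_norm_mul_self_sub_norm_sub_mul_self_div_two,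
      sub_sub_sub_cancel_right]
    simp only [sq]
  have row : ∑ i ∈ s, ∑ j ∈ s, w i * w j * ‖p i - o‖ ^ 2 = ∑ i ∈ s, w i * ‖p i - o‖ ^ 2 := by
    simp only [← sum_mul, ← mul_sum, hw, mul_one]
  have column : ∑ i ∈ s, ∑ j ∈ s, w i * w j * ‖p j - o‖ ^ 2 = ∑ i ∈ s, w i * ‖p i - o‖ ^ 2 := by
    simp only [mul_assoc, ← mul_sum, ← sum_mul, hw, one_mul]
  calc ‖∑ i ∈ s, w i • p i - o‖ ^ 2
      = ∑ i ∈ s, ∑ j ∈ s, w i * w j * inner ℝ (p i - o) (p j - o) := by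
        simp only [centered, ← real_inner_self_eq_norm_sq, sum_inner, inner_sum,
          real_inner_smul_left, real_inner_smul_right, mul_assoc]
        exact sum_congr rfl fun i _ ↦ sum_congr rfl fun j _ ↦ by rw [real_inner_comm]
    _ = 1 / 2 * (∑ i ∈ s, ∑ j ∈ s, w i * w j * ‖p i - o‖ ^ 2 +
          ∑ i ∈ s, ∑ j ∈ s, w i * w j * ‖p j - o‖ ^ 2 -
          ∑ i ∈ s, ∑ j ∈ s, w i * w j * ‖p i - p j‖ ^ 2) := by
        simp only [polarization, ← sum_add_distrib, ← sum_sub_distrib, mul_sum]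
        exact sum_congr rfl fun i _ ↦ sum_congr rfl fun j _ ↦ by ring
    _ = _ := by rw [row, column]; ring

section EdgeShear

variable {ι k V P : Type*} [CommRing k] [AddCommGroup V] [Module k V] [AddTorsor V P]
  (b : AffineBasis ι k P) {i j l : ι}

/-- The affine map that slides the vertex `b j` along the edge towards `b i`, to the point
`AffineMap.lineMap (b j) (b i) c`, and fixes the other vertices. For `c = 1 / 2` it maps the simplex
onto its half adjacent to `b i`. -/
noncomputable def edgeShear (i j : ι) (c : k) : P →ᵃ[k] P where
  toFun x := (c * b.coord j x) • (b i -ᵥ b j) +ᵥ x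
  linear := LinearMap.transvection (c • (b.coord j).linear) (b i -ᵥ b j)
  map_vadd' x v := by
    simp only [AffineMap.map_vadd, LinearMap.transvection.apply, LinearMap.smul_apply, vadd_vadd,
      vadd_eq_add, smul_eq_mul]
    congr 1
    module

theorem coord_edgeShear (c : k) (x : P) :
    b.coord l (edgeShear b i j c x) =
      b.coord l x + c * b.coord j x * (b.coord l (b i) - b.coord l (b j)) := by
  rw [← vsub_eq_sub, ← AffineMap.linearMap_vsub, add_comm, ← smul_eq_mul, ← map_smul,
    ← vadd_eq_add, ← AffineMap.map_vadd]
  rfl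

theorem coord_edgeShear_left (hij : i ≠ j) (c : k) (x : P) :
    b.coord i (edgeShear b i j c x) = b.coord i x + c * b.coord j x := by
  simp [coord_edgeShear, hij]

theorem coord_edgeShear_right (hij : i ≠ j) (c : k) (x : P) :
    b.coord j (edgeShear b i j c x) = (1 - c) * b.coord j x := by
  simp only [coord_edgeShear, b.coord_apply_ne hij.symm, b.coord_apply_eq]
  ring

theorem coord_edgeShear_of_ne (hi : l ≠ i) (hj : l ≠ j) (c : k) (x : P) :
    b.coord l (edgeShear b i j c x) = b.coord l x := by
  simp [coord_edgeShear, hi, hj]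

theorem coord_add_coord_edgeShear (hij : i ≠ j) (c : k) (x : P) :
    b.coord i (edgeShear b i j c x) + b.coord j (edgeShear b i j c x) =
      b.coord i x + b.coord j x := by
  rw [coord_edgeShear_left b hij, coord_edgeShear_right b hij]
  ring

theorem edgeShear_edgeShear (hij : i ≠ j) (c c' : k) (x : P) :
    edgeShear b i j c' (edgeShear b i j c x) = edgeShear b i j (c + c' * (1 - c)) x := by
  change (c' * b.coord j (edgeShear b i j c x)) • (b i -ᵥ b j) +ᵥ
    ((c * b.coord j x) • (b i -ᵥ b j) +ᵥ x) =
      ((c + c' * (1 - c)) * b.coord j x) • (b i -ᵥ b j) +ᵥ x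
  rw [coord_edgeShear_right b hij, vadd_vadd]
  congr 1
  module

theorem edgeShear_zero (x : P) : edgeShear b i j 0 x = x := by
  simp [edgeShear]

theorem edgeShear_leftInverse (hij : i ≠ j) {c c' : k} (h : c + c' * (1 - c) = 0) :
    Function.LeftInverse (edgeShear b i j c') (edgeShear b i j c) := fun x ↦ by
  rw [edgeShear_edgeShear b hij, h, edgeShear_zero]

theorem det_linear_edgeShear [Module.Finite k V] (hij : i ≠ j) (c : k) :
    LinearMap.det (edgeShear b i j c).linear = 1 - c := by
  have := Module.Free.of_basis (b.basisOf j)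
  have coord_vsub : (b.coord j).linear (b i -ᵥ b j) = -1 := by
    rw [AffineMap.linearMap_vsub, b.coord_apply_ne hij.symm, b.coord_apply_eq, vsub_eq_sub,
      zero_sub]
  rw [edgeShear, LinearMap.transvection.det, LinearMap.smul_apply, coord_vsub, smul_eq_mul,
    mul_neg_one, sub_eq_add_neg]

end EdgeShear

theorem coord_sub_coord_edgeShear_half {ι k V P : Type*} [Field k] [NeZero (2 : k)]
    [AddCommGroup V] [Module k V] [AddTorsor V P] (b : AffineBasis ι k P) {i j : ι} (hij : i ≠ j)
    (x : P) :
    b.coord i (edgeShear b i j (1 / 2) x) - b.coord j (edgeShear b i j (1 / 2) x) =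
      b.coord i x := by
  rw [coord_edgeShear_left b hij, coord_edgeShear_right b hij]
  field_simp
  ring

theorem image_edgeShear_half_convexHull {ι k E : Type*} [Field k] [LinearOrder k]
    [IsStrictOrderedRing k] [AddCommGroup E] [Module k E] (b : AffineBasis ι k E) {i j : ι}
    (hij : i ≠ j) :
    edgeShear b i j (1 / 2) '' convexHull k (Set.range b) =
      convexHull k (Set.range b) ∩ {x | b.coord j x ≤ b.coord i x} := by
  rw [Set.image_eq_preimage_of_inverse (edgeShear_leftInverse b hij (c' := -1) (by norm_num))
    (edgeShear_leftInverse b hij (by norm_num)), b.convexHull_eq_nonneg_coord]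
  ext x
  have left := coord_edgeShear_left b hij (-1) x
  have right := coord_edgeShear_right b hij (-1) x
  refine ⟨fun hx ↦ ⟨fun l ↦ ?_, ?_⟩, fun ⟨hx, hle⟩ l ↦ ?_⟩
  · rcases eq_or_ne l i with rfl | hi
    · linarith [hx l, hx j]
    rcases eq_or_ne l j with rfl | hj
    · linarith [hx l]
    exact (hx l).trans_eq (coord_edgeShear_of_ne b hi hj _ x)
  · change b.coord j x ≤ b.coord i x
    linarith [hx i]
  · rcases eq_or_ne l i with rfl | hi
    · linarith [hle.out]
    rcases eq_or_ne l j with rfl | hj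
    · linarith [hx l]
    exact (hx l).trans_eq (coord_edgeShear_of_ne b hi hj _ x).symm

section Integration

variable {E F : Type*} [NormedAddCommGroup E] [NormedSpace ℝ E] [FiniteDimensional ℝ E]
  [MeasurableSpace E] [BorelSpace E] [NormedAddCommGroup F] [NormedSpace ℝ F]
  (μ : Measure E) [μ.IsAddHaarMeasure]

theorem setIntegral_image_affineMap (T : E →ᵃ[ℝ] E) (hT : Function.Injective T) {s : Set E}
    (hs : MeasurableSet s) (f : E → F) :
    ∫ x in T '' s, f x ∂μ = |LinearMap.det T.linear| • ∫ x in s, f (T x) ∂μ := by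
  let T' : E →ᴬ[ℝ] E := ⟨T, T.continuous_of_finiteDimensional⟩
  rw [← integral_smul]
  exact integral_image_eq_integral_abs_det_fderiv_smul μ hs
    (fun _ _ ↦ T'.hasFDerivWithinAt) hT.injOn f

theorem measure_coord_eq_coord {ι : Type*} (b : AffineBasis ι ℝ E) {i j : ι} (hij : i ≠ j) :
    μ {x | b.coord i x = b.coord j x} = 0 := by
  let H : AffineSubspace ℝ E := (AffineSubspace.mk' (0 : ℝ) ⊥).comap (b.coord i - b.coord j)
  have coe_H : (H : Set E) = {x | b.coord i x = b.coord j x} := by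
    ext x
    simp [H, sub_eq_zero]
  have b_notMem : b i ∉ H := by
    rw [← SetLike.mem_coe, coe_H]
    simp [hij.symm]
  rw [← coe_H]
  exact Measure.addHaar_affineSubspace μ H fun h ↦ b_notMem (h ▸ AffineSubspace.mem_top ℝ E _)

variable {μ} in
theorem setIntegral_convexHull_eq_add_edgeShear {ι : Type*} [Finite ι] (b : AffineBasis ι ℝ E)
    {i j : ι} (hij : i ≠ j) {f : E → F} (hf : IntegrableOn f (convexHull ℝ (Set.range b)) μ) :
    ∫ x in convexHull ℝ (Set.range b), f x ∂μ =
      (1 / 2 : ℝ) • ∫ x in convexHull ℝ (Set.range b), f (edgeShear b i j (1 / 2) x) ∂μ +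
      (1 / 2 : ℝ) • ∫ x in convexHull ℝ (Set.range b), f (edgeShear b j i (1 / 2) x) ∂μ := by
  have meas : MeasurableSet (convexHull ℝ (Set.range b)) :=
    ((Set.finite_range b).isCompact_convexHull ℝ).measurableSet
  have half {i j : ι} (hij : i ≠ j) :
      ∫ x in convexHull ℝ (Set.range b) ∩ {x | b.coord j x ≤ b.coord i x}, f x ∂μ =
        (1 / 2 : ℝ) • ∫ x in convexHull ℝ (Set.range b), f (edgeShear b i j (1 / 2) x) ∂μ := by
    rw [← image_edgeShear_half_convexHull b hij, setIntegral_image_affineMap μ _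
      (edgeShear_leftInverse b hij (c' := -1) (by norm_num)).injective meas,
      det_linear_edgeShear b hij]
    norm_num
  have meas_half : MeasurableSet
      (convexHull ℝ (Set.range b) ∩ {x | b.coord i x ≤ b.coord j x}) :=
    meas.inter (isClosed_le (continuous_barycentric_coord b i)
      (continuous_barycentric_coord b j)).measurableSet
  have ae_disjoint : AEDisjoint μ
      (convexHull ℝ (Set.range b) ∩ {x | b.coord j x ≤ b.coord i x})
      (convexHull ℝ (Set.range b) ∩ {x | b.coord i x ≤ b.coord j x}) :=
    measure_mono_null (fun _ hx ↦ le_antisymm hx.2.2 hx.1.2) (measure_coord_eq_coord μ b hij)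
  have cover : {x | b.coord j x ≤ b.coord i x} ∪ {x | b.coord i x ≤ b.coord j x} = Set.univ :=
    Set.eq_univ_of_forall fun x ↦ le_total (b.coord j x) (b.coord i x)
  rw [← half hij, ← half hij.symm, ← setIntegral_union₀ ae_disjoint meas_half.nullMeasurableSet
    (hf.mono_set Set.inter_subset_left) (hf.mono_set Set.inter_subset_left),
    ← Set.inter_union_distrib_left, cover, Set.inter_univ]

end Integration

theorem integrableOn_convexHull_range {ι E F : Type*} [Finite ι] [NormedAddCommGroup E]
    [NormedSpace ℝ E] [MeasurableSpace E] [OpensMeasurableSpace E] [NormedAddCommGroup F]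
    {μ : Measure E} [IsFiniteMeasureOnCompacts μ] (p : ι → E) {f : E → F} (hf : Continuous f) :
    IntegrableOn f (convexHull ℝ (Set.range p)) μ :=
  hf.continuousOn.integrableOn_compact ((Set.finite_range p).isCompact_convexHull ℝ)

section Moments

variable {ι E : Type*} [NormedAddCommGroup E] [NormedSpace ℝ E] [FiniteDimensional ℝ E]
  [MeasurableSpace E] [BorelSpace E] (μ : Measure E) [μ.IsAddHaarMeasure]
  (b : AffineBasis ι ℝ E)

theorem integral_coord_sub_mul_comp_coord_add [Finite ι] (i j : ι) {g : ℝ → ℝ}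
    (hg : Continuous g) :
    ∫ x in convexHull ℝ (Set.range b),
      (b.coord i x - b.coord j x) * g (b.coord i x + b.coord j x) ∂μ = 0 := by
  rcases eq_or_ne i j with rfl | hij
  · simp
  have hc := continuous_barycentric_coord b
  have swapped_sub (x : E) : b.coord i (edgeShear b j i (1 / 2) x) -
      b.coord j (edgeShear b j i (1 / 2) x) = -b.coord j x := by
    rw [← neg_sub, coord_sub_coord_edgeShear_half b hij.symm]
  have swapped_add (x : E) : b.coord i (edgeShear b j i (1 / 2) x) +
      b.coord j (edgeShear b j i (1 / 2) x) = b.coord i x + b.coord j x := by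
    rw [add_comm, coord_add_coord_edgeShear b hij.symm, add_comm]
  have split := setIntegral_convexHull_eq_add_edgeShear (μ := μ) b hij
    (f := fun x ↦ (b.coord i x - b.coord j x) * g (b.coord i x + b.coord j x))
    (integrableOn_convexHull_range b (by fun_prop))
  simp only [coord_sub_coord_edgeShear_half b hij, coord_add_coord_edgeShear b hij, swapped_sub,
    swapped_add, neg_mul, integral_neg, smul_eq_mul] at split
  simp only [sub_mul] at split ⊢
  rw [integral_sub (integrableOn_convexHull_range b (by fun_prop))
    (integrableOn_convexHull_range b (by fun_prop))] at split ⊢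
  linarith

theorem integral_coord_eq [Finite ι] (i j : ι) :
    ∫ x in convexHull ℝ (Set.range b), b.coord i x ∂μ =
      ∫ x in convexHull ℝ (Set.range b), b.coord j x ∂μ := by
  have hc := continuous_barycentric_coord b
  rw [← sub_eq_zero, ← integral_sub (integrableOn_convexHull_range b (hc i))
    (integrableOn_convexHull_range b (hc j))]
  simpa using integral_coord_sub_mul_comp_coord_add μ b i j (g := fun _ ↦ 1) continuous_const

theorem integral_coord_sq_eq [Finite ι] (i j : ι) :
    ∫ x in convexHull ℝ (Set.range b), b.coord i x ^ 2 ∂μ =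
      ∫ x in convexHull ℝ (Set.range b), b.coord j x ^ 2 ∂μ := by
  have hc := continuous_barycentric_coord b
  rw [← sub_eq_zero, ← integral_sub (integrableOn_convexHull_range b (by fun_prop))
    (integrableOn_convexHull_range b (by fun_prop)),
    ← integral_coord_sub_mul_comp_coord_add μ b i j continuous_id]
  simp only [id, sq_sub_sq, mul_comm]

theorem integral_coord_sub_sq [Finite ι] {i j : ι} (hij : i ≠ j) :
    ∫ x in convexHull ℝ (Set.range b), (b.coord i x - b.coord j x) ^ 2 ∂μ =
      ∫ x in convexHull ℝ (Set.range b), b.coord i x ^ 2 ∂μ := by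
  have hc := continuous_barycentric_coord b
  rw [setIntegral_convexHull_eq_add_edgeShear b hij
    (integrableOn_convexHull_range b (by fun_prop))]
  simp only [coord_sub_coord_edgeShear_half b hij, sub_sq_comm (b.coord i _),
    coord_sub_coord_edgeShear_half b hij.symm, integral_coord_sq_eq μ b j i, ← add_smul]
  norm_num

theorem integral_coord_mul_coord_eq_half_integral_coord_sq [Finite ι] {i j : ι} (hij : i ≠ j) :
    ∫ x in convexHull ℝ (Set.range b), b.coord i x * b.coord j x ∂μ =
      1 / 2 * ∫ x in convexHull ℝ (Set.range b), b.coord i x ^ 2 ∂μ := by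
  have hc := continuous_barycentric_coord b
  have expand : ∫ x in convexHull ℝ (Set.range b), (b.coord i x - b.coord j x) ^ 2 ∂μ =
      ∫ x in convexHull ℝ (Set.range b), b.coord i x ^ 2 ∂μ -
        2 * ∫ x in convexHull ℝ (Set.range b), b.coord i x * b.coord j x ∂μ +
        ∫ x in convexHull ℝ (Set.range b), b.coord j x ^ 2 ∂μ := by
    simp only [sub_sq, mul_assoc]
    rw [integral_add, integral_sub, integral_const_mul] <;>
      exact integrableOn_convexHull_range b (by fun_prop)
  linarith [integral_coord_sub_sq μ b hij, integral_coord_sq_eq μ b i j]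

variable [Fintype ι]

theorem integral_coord (i : ι) :
    ∫ x in convexHull ℝ (Set.range b), b.coord i x ∂μ =
      μ.real (convexHull ℝ (Set.range b)) / Fintype.card ι := by
  have : Nonempty ι := ⟨i⟩
  have total : ∑ k, ∫ x in convexHull ℝ (Set.range b), b.coord k x ∂μ =
      μ.real (convexHull ℝ (Set.range b)) := by
    rw [← integral_finsetSum _ fun k _ ↦
      integrableOn_convexHull_range b (continuous_barycentric_coord b k)]
    simp [b.sum_coord_apply_eq_one]
  rw [eq_div_iff (by simp), mul_comm, ← total, sum_congr rfl fun k _ ↦ integral_coord_eq μ b k i]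
  simp

theorem integral_coord_mul_coord {i j : ι} (hij : i ≠ j) :
    ∫ x in convexHull ℝ (Set.range b), b.coord i x * b.coord j x ∂μ =
      μ.real (convexHull ℝ (Set.range b)) / (Fintype.card ι * (Fintype.card ι + 1)) := by
  classical
  have : Nonempty ι := ⟨i⟩
  have hc := continuous_barycentric_coord b
  have total : ∑ k, ∫ x in convexHull ℝ (Set.range b), b.coord i x * b.coord k x ∂μ =
      ∫ x in convexHull ℝ (Set.range b), b.coord i x ∂μ := by
    rw [← integral_finsetSum _ fun k _ ↦ integrableOn_convexHull_range b (by fun_prop)]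
    simp only [← mul_sum, b.sum_coord_apply_eq_one, mul_one]
  have off_diag : ∑ k ∈ {i}ᶜ, ∫ x in convexHull ℝ (Set.range b), b.coord i x * b.coord k x ∂μ =
      (Fintype.card ι - 1) *
        (1 / 2 * ∫ x in convexHull ℝ (Set.range b), b.coord i x ^ 2 ∂μ) := by
    rw [sum_congr rfl fun k hk ↦
      integral_coord_mul_coord_eq_half_integral_coord_sq μ b (by simpa [eq_comm] using hk)]
    simp [card_compl, Nat.cast_sub Fintype.card_pos]
  rw [← sum_add_sum_compl {i}, sum_singleton, off_diag, integral_coord] at total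
  simp only [← sq] at total
  rw [integral_coord_mul_coord_eq_half_integral_coord_sq μ b hij, ← div_div, ← total]
  field_simp
  ring

end Moments

section Inertia

variable {ι E : Type*} [Fintype ι] [NormedAddCommGroup E] [InnerProductSpace ℝ E]
  [FiniteDimensional ℝ E] [MeasurableSpace E] [BorelSpace E]
  (μ : Measure E) [μ.IsAddHaarMeasure] (b : AffineBasis ι ℝ E)

theorem integral_norm_sub_sq_convexHull (o : E) :
    ∫ x in convexHull ℝ (Set.range b), ‖x - o‖ ^ 2 ∂μ =
      μ.real (convexHull ℝ (Set.range b)) / Fintype.card ι * ∑ i, ‖b i - o‖ ^ 2 -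
      μ.real (convexHull ℝ (Set.range b)) / (Fintype.card ι * (Fintype.card ι + 1)) *
        (1 / 2 * ∑ i, ∑ j, ‖b i - b j‖ ^ 2) := by
  have hc := continuous_barycentric_coord b
  have leibniz (x : E) : ‖x - o‖ ^ 2 = ∑ i, b.coord i x * ‖b i - o‖ ^ 2 -
      1 / 2 * ∑ i, ∑ j, b.coord i x * b.coord j x * ‖b i - b j‖ ^ 2 := by
    rw [← norm_sum_smul_sub_sq (b.sum_coord_apply_eq_one x),
      b.linear_combination_coord_eq_self]
  have linear_part : ∫ x in convexHull ℝ (Set.range b), ∑ i, b.coord i x * ‖b i - o‖ ^ 2 ∂μ =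
      μ.real (convexHull ℝ (Set.range b)) / Fintype.card ι * ∑ i, ‖b i - o‖ ^ 2 := by
    rw [integral_finsetSum _ fun i _ ↦ integrableOn_convexHull_range b (by fun_prop)]
    simp only [integral_mul_const, integral_coord, mul_sum]
  have edge (i j : ι) :
      ∫ x in convexHull ℝ (Set.range b), b.coord i x * b.coord j x * ‖b i - b j‖ ^ 2 ∂μ =
      μ.real (convexHull ℝ (Set.range b)) / (Fintype.card ι * (Fintype.card ι + 1)) *
        ‖b i - b j‖ ^ 2 := by
    rcases eq_or_ne i j with rfl | hij
    · simp
    · rw [integral_mul_const, integral_coord_mul_coord μ b hij]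
  have quadratic_part : ∫ x in convexHull ℝ (Set.range b),
        ∑ i, ∑ j, b.coord i x * b.coord j x * ‖b i - b j‖ ^ 2 ∂μ =
      μ.real (convexHull ℝ (Set.range b)) / (Fintype.card ι * (Fintype.card ι + 1)) *
        ∑ i, ∑ j, ‖b i - b j‖ ^ 2 := by
    rw [integral_finsetSum _ fun i _ ↦ integrableOn_convexHull_range b (by fun_prop), mul_sum]
    refine sum_congr rfl fun i _ ↦ ?_
    rw [integral_finsetSum _ fun j _ ↦ integrableOn_convexHull_range b (by fun_prop), mul_sum]
    exact sum_congr rfl fun j _ ↦ edge i j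
  rw [integral_congr_ae (.of_forall leibniz),
    integral_sub (integrableOn_convexHull_range b (by fun_prop))
    (integrableOn_convexHull_range b (by fun_prop)), integral_const_mul, linear_part,
    quadratic_part]
  ring

theorem neg_pow_eq_sum_sq_edges_general [LinearOrder ι] [LocallyFiniteOrderTop ι]
    [LocallyFiniteOrderBot ι] (o : E) (R : ℝ) (ho : ∀ i, dist (b i) o = R) :
    -(∫ x in convexHull ℝ (Set.range b), (‖x - o‖ ^ 2 - R ^ 2) ∂μ) =
      μ.real (convexHull ℝ (Set.range b)) / (Fintype.card ι * (Fintype.card ι + 1)) *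
        ∑ i, ∑ j ∈ Iio i, ‖b i - b j‖ ^ 2 := by
  have := b.nonempty
  have edges : ∑ i, ∑ j, ‖b i - b j‖ ^ 2 = 2 * ∑ i, ∑ j ∈ Iio i, ‖b i - b j‖ ^ 2 :=
    sum_sum_eq_two_mul_sum_sum_Iio _ (fun i j ↦ by rw [norm_sub_rev]) fun i ↦ by simp
  rw [integral_sub (integrableOn_convexHull_range b (by fun_prop))
    (integrableOn_convexHull_range b continuous_const), integral_norm_sub_sq_convexHull, edges]
  simp only [← dist_eq_norm (b _) o, ho, sum_const, card_univ, nsmul_eq_mul, setIntegral_const,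
    smul_eq_mul]
  field_simp
  ring

end Inertia

/-- `-Pow(Δ) = Vol(Δ)/((d+1)(d+2)) · Σ_{j<i} ‖v_i - v_j‖²` for a nondegenerate `d`-simplex. -/
theorem neg_pow_eq_sum_sq_edges {d : ℕ}
    (v : Fin (d + 1) → EuclideanSpace ℝ (Fin d)) (hv : AffineIndependent ℝ v)
    (o : EuclideanSpace ℝ (Fin d)) (R : ℝ) (ho : ∀ i, dist (v i) o = R) :
    -(∫ x in convexHull ℝ (Set.range v), (‖x - o‖ ^ 2 - R ^ 2)) =
      (volume (convexHull ℝ (Set.range v))).toReal / ((d + 1) * (d + 2)) *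
        ∑ i : Fin (d + 1), ∑ j ∈ Finset.Iio i, ‖v i - v j‖ ^ 2 := by
  obtain ⟨b, rfl⟩ : ∃ b : AffineBasis (Fin (d + 1)) ℝ (EuclideanSpace ℝ (Fin d)), ⇑b = v :=
    ⟨⟨v, hv, hv.affineSpan_eq_top_iff_card_eq_finrank_add_one.2 (by simp)⟩, rfl⟩
  simpa [Measure.real, add_assoc, one_add_one_eq_two] using
    neg_pow_eq_sum_sq_edges_general volume b o R ho
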